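/- Let F_{n,β}(x) = (1/β) log(∑_{i=1}^n e^{β x_i}) and γₙ the standard Gaussian measure. For 0 < β < √(ln 2 / 2) (indeed for 0 < β < 1/√2), Var_{γₙ}(F_{n,β}) ≤ ((1-β²)/(1-2β²)) · (1/n). -/

import Mathlib

open MeasureTheory ProbabilityTheory

/-- The standard Gaussian measure on `ℝⁿ`. -/
noncomputable def gaussN (n : ℕ) : Measure (Fin n → ℝ) :=
  Measure.pi fun _ => gaussianReal 0 1

/-- The free energy of the Random Energy Model (after normalization):
the log-sum-exp function `F_{n,β}`. -/
noncomputable def freeEnergy (n : ℕ) (β : ℝ) (x : Fin n → ℝ) : ℝ :=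
  (1 / β) * Real.log (∑ i, Real.exp (β * x i))

/-!
Efron–Stein reduces the Gaussian Poincaré inequality `Var f ≤ ∑ i, E (∂ᵢ f)²` to one dimension,
where `2 Var f = E (f X - f Y)²` is bounded by Cauchy–Schwarz on the interval between `X` and `Y`.

The partial derivatives of the free energy are the Gibbs weights `pᵢ`, so its variance is at most
`Q := ∑ i, E pᵢ²`. The `pᵢ` have mean `1 / n` by exchangeability and satisfy
`∑ i, ∑ j, (∂ⱼ pᵢ)² ≤ β² ∑ i, pᵢ²`, so the Poincaré inequality applied to each `pᵢ` gives
`Q - 1 / n ≤ β² Q`.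
-/

open scoped ENNReal NNReal symmDiff

section Variance

variable {Ω : Type*} {mΩ : MeasurableSpace Ω} {μ : Measure Ω} {f : Ω → ℝ}

lemma lintegral_enorm_sq_eq_ofReal_integral_sq (hf : MemLp f 2 μ) :
    ∫⁻ x, ‖f x‖ₑ ^ 2 ∂μ = ENNReal.ofReal (∫ x, f x ^ 2 ∂μ) := by
  rw [ofReal_integral_eq_lintegral_ofReal hf.integrable_sq (.of_forall fun x ↦ sq_nonneg _)]
  refine lintegral_congr fun x ↦ ?_
  rw [Real.enorm_eq_ofReal_abs, ← ENNReal.ofReal_pow (abs_nonneg _), sq_abs]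

lemma sq_lintegral_le {h : Ω → ℝ≥0∞} (hh : AEMeasurable h μ) :
    (∫⁻ x, h x ∂μ) ^ 2 ≤ μ Set.univ * ∫⁻ x, h x ^ 2 ∂μ := by
  have hcauchy := ENNReal.lintegral_mul_le_Lp_mul_Lq μ Real.HolderConjugate.two_two
    (aemeasurable_const (b := (1 : ℝ≥0∞))) hh
  calc (∫⁻ x, h x ∂μ) ^ 2
    _ ≤ (μ Set.univ ^ (1 / 2 : ℝ) * (∫⁻ x, h x ^ 2 ∂μ) ^ (1 / 2 : ℝ)) ^ 2 := by
      gcongr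
      simpa using hcauchy
    _ = μ Set.univ * ∫⁻ x, h x ^ 2 ∂μ := by
      rw [mul_pow]
      simp [← ENNReal.rpow_mul_natCast]

lemma lintegral_enorm_sub_const_sq_eq_top [IsFiniteMeasure μ] (hf : AEStronglyMeasurable f μ)
    (hf2 : ¬ MemLp f 2 μ) (c : ℝ) : ∫⁻ x, ‖f x - c‖ₑ ^ 2 ∂μ = ∞ := by
  by_contra h
  have hsub : MemLp (fun x ↦ f x - c) 2 μ := by
    refine ⟨hf.sub aestronglyMeasurable_const, ?_⟩
    rw [eLpNorm_lt_top_iff_lintegral_rpow_enorm_lt_top two_ne_zero ENNReal.ofNat_ne_top]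
    simpa using lt_top_iff_ne_top.2 h
  exact hf2 <| by simpa [Pi.add_def] using hsub.add (memLp_const c)

theorem lintegral_prod_enorm_sub_sq [IsProbabilityMeasure μ] (hf : AEStronglyMeasurable f μ) :
    ∫⁻ p, ‖f p.1 - f p.2‖ₑ ^ 2 ∂μ.prod μ = 2 * eVar[f; μ] := by
  by_cases hf2 : MemLp f 2 μ
  · have hsub : MemLp (fun p : Ω × Ω ↦ f p.1 - f p.2) 2 (μ.prod μ) :=
      (hf2.comp_fst μ).sub (hf2.comp_snd μ)
    have hmean : ∫ p : Ω × Ω, f p.1 - f p.2 ∂μ.prod μ = 0 := by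
      have hinteg := hf2.integrable one_le_two
      rw [integral_sub (hinteg.comp_fst μ) (hinteg.comp_snd μ), integral_fun_fst, integral_fun_snd,
        sub_self]
    have hvar : Var[fun p : Ω × Ω ↦ f p.1 - f p.2; μ.prod μ] = 2 * Var[f; μ] := by
      have := variance_add_prod hf2 hf2.neg
      rw [variance_neg] at this
      simpa [sub_eq_add_neg, two_mul] using this
    calc ∫⁻ p, ‖f p.1 - f p.2‖ₑ ^ 2 ∂μ.prod μ
        = eVar[fun p : Ω × Ω ↦ f p.1 - f p.2; μ.prod μ] := by simp [evariance, hmean]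
      _ = 2 * eVar[f; μ] := by
        rw [← ofReal_variance hsub, hvar, ENNReal.ofReal_mul zero_le_two, ofReal_variance hf2,
          ENNReal.ofReal_ofNat]
  · have hmeas : AEMeasurable (fun p : Ω × Ω ↦ ‖f p.1 - f p.2‖ₑ ^ 2) (μ.prod μ) :=
      (hf.comp_fst.sub hf.comp_snd).enorm.pow_const 2
    rw [lintegral_prod_symm _ hmeas, evariance_eq_top hf hf2]
    simp [lintegral_enorm_sub_const_sq_eq_top hf hf2]

end Variance

section EfronStein

lemma enorm_sub_sq_add_enorm_sub_sq_le (a b c d : ℝ) :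
    ‖a - c‖ₑ ^ 2 + ‖b - d‖ₑ ^ 2
      ≤ ‖a - b‖ₑ ^ 2 + ‖b - c‖ₑ ^ 2 + ‖c - d‖ₑ ^ 2 + ‖d - a‖ₑ ^ 2 := by
  have enorm_sq : ∀ x : ℝ, ‖x‖ₑ ^ 2 = ENNReal.ofReal (x ^ 2) := fun x ↦ by
    rw [Real.enorm_eq_ofReal_abs, ← ENNReal.ofReal_pow (abs_nonneg x), sq_abs]
  simp only [enorm_sq]
  repeat rw [← ENNReal.ofReal_add (by positivity) (by positivity)]
  apply ENNReal.ofReal_le_ofReal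
  nlinarith [sq_nonneg (a + c - b - d)]

variable {ι α : Type*} [DecidableEq ι] [MeasurableSpace α]

lemma measurable_comp_finset_piecewise {γ : Type*} [MeasurableSpace γ] {f : (ι → α) → γ}
    (hf : Measurable f) (s : Finset ι) :
    Measurable fun p : (ι → α) × (ι → α) ↦ f (s.piecewise p.2 p.1) := by
  have (i : ι) : Measurable fun p : (ι → α) × (ι → α) ↦ s.piecewise p.2 p.1 i := by
    by_cases hi : i ∈ s <;> simp only [hi, Finset.piecewise, if_true, if_false] <;> fun_prop
  fun_prop

variable [Fintype ι] (μ : ι → Measure α)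

lemma measurePreserving_piecewise_swap [∀ i, SigmaFinite (μ i)] (s : Finset ι) :
    MeasurePreserving
      (fun p : (ι → α) × (ι → α) ↦ (s.piecewise p.2 p.1, s.piecewise p.1 p.2))
      ((Measure.pi μ).prod (Measure.pi μ)) ((Measure.pi μ).prod (Measure.pi μ)) := by
  have hzip := measurePreserving_arrowProdEquivProdArrow α α ι μ μ
  have hswap : ∀ i, MeasurePreserving (if i ∈ s then Prod.swap else id)
      ((μ i).prod (μ i)) ((μ i).prod (μ i)) := fun i ↦ by
    split_ifs
    exacts [Measure.measurePreserving_swap, .id _]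
  convert hzip.comp ((measurePreserving_pi _ _ hswap).comp hzip.symm) using 1
  funext p
  ext i <;> by_cases hi : i ∈ s <;>
    simp [hi, MeasurableEquiv.arrowProdEquivProdArrow, Equiv.arrowProdEquivProdArrow]

/-- The mean squared increment of `f` when the coordinates in `s` of a sample of `Measure.pi μ` are
replaced by those of an independent copy. It is valued in `ℝ≥0∞`, so that no integrability of `f` is
needed; for `s = univ` it is twice the variance, for `s = {i}` twice the mean variance along the
`i`-th coordinate. -/
noncomputable def resamplingEnergy (f : (ι → α) → ℝ) (s : Finset ι) : ℝ≥0∞ :=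
  ∫⁻ p, ‖f p.1 - f (s.piecewise p.2 p.1)‖ₑ ^ 2 ∂(Measure.pi μ).prod (Measure.pi μ)

variable {μ} {f : (ι → α) → ℝ}

section SigmaFinite

variable [∀ i, SigmaFinite (μ i)]

lemma lintegral_enorm_piecewise_sub_piecewise_sq (hf : Measurable f) (s t : Finset ι) :
    ∫⁻ p, ‖f (s.piecewise p.2 p.1) - f (t.piecewise p.2 p.1)‖ₑ ^ 2
        ∂(Measure.pi μ).prod (Measure.pi μ)
      = resamplingEnergy μ f (s ∆ t) := by
  have hmeas : Measurable fun p : (ι → α) × (ι → α) ↦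
      ‖f (s.piecewise p.2 p.1) - f (t.piecewise p.2 p.1)‖ₑ ^ 2 :=
    ((measurable_comp_finset_piecewise hf s).sub
      (measurable_comp_finset_piecewise hf t)).enorm.pow_const 2
  have hswap_s (p : (ι → α) × (ι → α)) :
      s.piecewise (s.piecewise p.1 p.2) (s.piecewise p.2 p.1) = p.1 := by
    funext i
    by_cases his : i ∈ s <;> simp [his]
  have hswap_t (p : (ι → α) × (ι → α)) :
      t.piecewise (s.piecewise p.1 p.2) (s.piecewise p.2 p.1) = (s ∆ t).piecewise p.2 p.1 := by
    funext i
    by_cases his : i ∈ s <;> by_cases hit : i ∈ t <;> simp [his, hit, Finset.mem_symmDiff]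
  rw [← (measurePreserving_piecewise_swap μ s).lintegral_comp hmeas]
  simp only [hswap_s, hswap_t, resamplingEnergy]

lemma resamplingEnergy_symmDiff_le (hf : Measurable f) (s t : Finset ι) :
    resamplingEnergy μ f (s ∆ t) ≤ resamplingEnergy μ f s + resamplingEnergy μ f t := by
  set P := (Measure.pi μ).prod (Measure.pi μ)
  let F (r : Finset ι) (p : (ι → α) × (ι → α)) : ℝ := f (r.piecewise p.2 p.1)
  have hF (r : Finset ι) : Measurable (F r) := measurable_comp_finset_piecewise hf r
  have energy (a b : Finset ι) : ∫⁻ p, ‖F a p - F b p‖ₑ ^ 2 ∂P = resamplingEnergy μ f (a ∆ b) :=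
    lintegral_enorm_piecewise_sub_piecewise_sq hf a b
  -- The diagonals of this quadrilateral both have energy `s ∆ t`, its sides `s`, `t`, `s`, `t`.
  have quadrilateral := lintegral_mono (μ := P) fun p ↦
    enorm_sub_sq_add_enorm_sub_sq_le (F ∅ p) (F s p) (F (s ∆ t) p) (F t p)
  have hmeas (a b : Finset ι) : Measurable fun p ↦ ‖F a p - F b p‖ₑ ^ 2 := by fun_prop
  rw [lintegral_add_right _ (hmeas _ _), lintegral_add_right _ (hmeas _ _),
    lintegral_add_right _ (hmeas _ _), lintegral_add_right _ (hmeas _ _)] at quadrilateral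
  have htwice : 2 * resamplingEnergy μ f (s ∆ t)
      ≤ 2 * (resamplingEnergy μ f s + resamplingEnergy μ f t) := by
    simp only [energy, ← Finset.bot_eq_empty, bot_symmDiff, symmDiff_bot,
      symmDiff_symmDiff_cancel_left, symmDiff_symmDiff_cancel_right] at quadrilateral
    rw [two_mul]
    exact quadrilateral.trans_eq (by ring)
  exact (ENNReal.mul_le_mul_iff_right two_ne_zero ENNReal.ofNat_ne_top).1 htwice

lemma resamplingEnergy_le_sum (hf : Measurable f) (s : Finset ι) :
    resamplingEnergy μ f s ≤ ∑ i ∈ s, resamplingEnergy μ f {i} := by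
  induction s using Finset.induction_on with
  | empty => simp [resamplingEnergy]
  | insert i s hi ih =>
    have hsymm : insert i s = {i} ∆ s := by
      rw [(Finset.disjoint_singleton_left.2 hi).symmDiff_eq_sup, Finset.sup_eq_union,
        Finset.insert_eq]
    rw [Finset.sum_insert hi]
    calc resamplingEnergy μ f (insert i s)
      _ ≤ resamplingEnergy μ f {i} + resamplingEnergy μ f s :=
        hsymm ▸ resamplingEnergy_symmDiff_le hf {i} s
      _ ≤ _ := by gcongr

end SigmaFinite

variable [∀ i, IsProbabilityMeasure (μ i)]

lemma lintegral_pi_lintegral_update {X : ι → Type*} [∀ i, MeasurableSpace (X i)]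
    (ν : ∀ i, Measure (X i)) [∀ i, IsProbabilityMeasure (ν i)] {g : (∀ i, X i) → ℝ≥0∞}
    (hg : Measurable g) (i : ι) :
    ∫⁻ x, ∫⁻ t, g (Function.update x i t) ∂ν i ∂Measure.pi ν = ∫⁻ x, g x ∂Measure.pi ν := by
  have hupdate : (fun x ↦ ∫⁻ t, g (Function.update x i t) ∂ν i) = ∫⋯∫⁻_{i}, g ∂ν :=
    (lmarginal_singleton g i).symm
  rw [hupdate]
  refine lintegral_eq_of_lmarginal_eq {i} (hg.lmarginal ν) hg ?_
  funext x
  simp only [lmarginal_singleton, Function.update_idem]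
  simp

lemma resamplingEnergy_singleton (hf : Measurable f) (i : ι) :
    resamplingEnergy μ f {i}
      = 2 * ∫⁻ x, eVar[fun t ↦ f (Function.update x i t); μ i] ∂Measure.pi μ := by
  have hline (x : ι → α) : Measurable fun t ↦ f (Function.update x i t) := by fun_prop
  let g (x : ι → α) : ℝ≥0∞ := ∫⁻ t, ‖f x - f (Function.update x i t)‖ₑ ^ 2 ∂μ i
  have hg : Measurable g := Measurable.lintegral_prod_right'
    (f := fun q : (ι → α) × α ↦ ‖f q.1 - f (Function.update q.1 i q.2)‖ₑ ^ 2) (by fun_prop)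
  calc resamplingEnergy μ f {i}
    _ = ∫⁻ x, ∫⁻ y, ‖f x - f (Function.update x i (y i))‖ₑ ^ 2 ∂Measure.pi μ ∂Measure.pi μ := by
      simp only [resamplingEnergy, Finset.piecewise_singleton]
      exact lintegral_prod _ (by fun_prop)
    _ = ∫⁻ x, g x ∂Measure.pi μ := lintegral_congr fun x ↦
      (measurePreserving_eval μ i).lintegral_comp
        (f := fun t ↦ ‖f x - f (Function.update x i t)‖ₑ ^ 2) (by fun_prop)
    _ = ∫⁻ x, ∫⁻ s, g (Function.update x i s) ∂μ i ∂Measure.pi μ :=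
      (lintegral_pi_lintegral_update μ hg i).symm
    _ = ∫⁻ x, 2 * eVar[fun t ↦ f (Function.update x i t); μ i] ∂Measure.pi μ := by
      refine lintegral_congr fun x ↦ ?_
      rw [← lintegral_prod_enorm_sub_sq (hline x).aestronglyMeasurable,
        lintegral_prod _ (by fun_prop)]
      simp only [g, Function.update_idem]
    _ = _ := lintegral_const_mul' _ _ ENNReal.ofNat_ne_top

theorem evariance_pi_le_sum_lintegral_evariance (hf : Measurable f) :
    eVar[f; Measure.pi μ]
      ≤ ∑ i, ∫⁻ x, eVar[fun t ↦ f (Function.update x i t); μ i] ∂Measure.pi μ := by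
  have htwice : 2 * eVar[f; Measure.pi μ]
      ≤ 2 * ∑ i, ∫⁻ x, eVar[fun t ↦ f (Function.update x i t); μ i] ∂Measure.pi μ := by
    calc 2 * eVar[f; Measure.pi μ]
      _ = resamplingEnergy μ f Finset.univ := by
        simp only [resamplingEnergy, Finset.piecewise_univ]
        exact (lintegral_prod_enorm_sub_sq hf.aestronglyMeasurable).symm
      _ ≤ ∑ i, resamplingEnergy μ f {i} := resamplingEnergy_le_sum hf Finset.univ
      _ = _ := by simp only [resamplingEnergy_singleton hf, Finset.mul_sum]
  exact (ENNReal.mul_le_mul_iff_right two_ne_zero ENNReal.ofNat_ne_top).1 htwice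

end EfronStein

section PoincareReal

lemma enorm_sub_sq_le_enorm_sub_mul_lintegral {E : Type*} [NormedAddCommGroup E] [NormedSpace ℝ E]
    {f : ℝ → E} (hf : ContDiff ℝ 1 f) (x y : ℝ) :
    ‖f x - f y‖ₑ ^ 2 ≤ ‖x - y‖ₑ * ∫⁻ s in Set.uIoc x y, ‖deriv f s‖ₑ ^ 2 := by
  wlog hxy : x ≤ y generalizing x y
  · rw [← enorm_neg, neg_sub, ← enorm_neg (x - y), neg_sub, Set.uIoc_comm]
    exact this y x (le_of_not_ge hxy)
  have hderiv : Measurable fun s ↦ ‖deriv f s‖ₑ := (hf.continuous_deriv le_rfl).enorm.measurable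
  calc ‖f x - f y‖ₑ ^ 2
    _ ≤ (∫⁻ s in Set.Icc x y, ‖deriv f s‖ₑ) ^ 2 := by
      rw [← enorm_neg, neg_sub]
      gcongr
      exact enorm_sub_le_lintegral_deriv_of_contDiffOn_Icc hf.contDiffOn hxy
    _ ≤ volume (Set.Icc x y) * ∫⁻ s in Set.Icc x y, ‖deriv f s‖ₑ ^ 2 := by
      simpa only [Measure.restrict_apply_univ] using
        sq_lintegral_le (μ := volume.restrict (Set.Icc x y)) hderiv.aemeasurable
    _ = ‖x - y‖ₑ * ∫⁻ s in Set.uIoc x y, ‖deriv f s‖ₑ ^ 2 := by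
      rw [Set.uIoc_of_le hxy, restrict_Ioc_eq_restrict_Icc, Real.volume_Icc, ← enorm_neg, neg_sub,
        Real.enorm_of_nonneg (sub_nonneg.2 hxy)]

lemma lintegral_mul_setLIntegral_uIoc {ν : Measure (ℝ × ℝ)} [SFinite ν] {k : ℝ × ℝ → ℝ≥0∞}
    {g : ℝ → ℝ≥0∞} (hk : Measurable k) (hg : Measurable g) :
    ∫⁻ p, k p * (∫⁻ s in Set.uIoc p.1 p.2, g s) ∂ν
      = ∫⁻ s, g s * ∫⁻ p in {p : ℝ × ℝ | s ∈ Set.uIoc p.1 p.2}, k p ∂ν := by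
  let U : Set ((ℝ × ℝ) × ℝ) := {q | q.2 ∈ Set.uIoc q.1.1 q.1.2}
  have hU : MeasurableSet U := by
    simp only [U, Set.mem_uIoc]
    measurability
  have hmeas : Measurable (U.indicator fun q ↦ k q.1 * g q.2) :=
    Measurable.indicator (by fun_prop) hU
  calc ∫⁻ p, k p * (∫⁻ s in Set.uIoc p.1 p.2, g s) ∂ν
    _ = ∫⁻ p, (∫⁻ s, U.indicator (fun q ↦ k q.1 * g q.2) (p, s)) ∂ν := by
      refine lintegral_congr fun p ↦ ?_
      rw [← lintegral_const_mul _ hg, ← lintegral_indicator measurableSet_uIoc]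
      rfl
    _ = ∫⁻ s, ∫⁻ p, U.indicator (fun q ↦ k q.1 * g q.2) (p, s) ∂ν :=
      lintegral_lintegral_swap hmeas.aemeasurable
    _ = ∫⁻ s, g s * ∫⁻ p in {p : ℝ × ℝ | s ∈ Set.uIoc p.1 p.2}, k p ∂ν := by
      refine lintegral_congr fun s ↦ ?_
      have hs : MeasurableSet {p : ℝ × ℝ | s ∈ Set.uIoc p.1 p.2} :=
        hU.preimage (measurable_id.prodMk measurable_const)
      rw [← lintegral_const_mul _ hk, ← lintegral_indicator hs]
      simp only [mul_comm (g s)]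
      rfl

section Kernel

variable {μ : Measure ℝ} [IsProbabilityMeasure μ]

lemma setLIntegral_Ici_prod_Iio_enorm_sub (hμ : Integrable (fun t ↦ t) μ) (s : ℝ) :
    ∫⁻ p in Set.Ici s ×ˢ Set.Iio s, ‖p.1 - p.2‖ₑ ∂μ.prod μ
      = ENNReal.ofReal (∫ x in Set.Ici s, (x - ∫ t, t ∂μ) ∂μ) := by
  have hinteg : Integrable (fun p : ℝ × ℝ ↦ p.1 - p.2) (μ.prod μ) :=
    (hμ.comp_fst μ).sub (hμ.comp_snd μ)
  have hsplit : ∫ t, t ∂μ = ∫ t in Set.Ici s, t ∂μ + ∫ t in Set.Iio s, t ∂μ := by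
    rw [← Set.compl_Ici]
    exact (integral_add_compl measurableSet_Ici hμ).symm
  have hIio : μ.real (Set.Iio s) = 1 - μ.real (Set.Ici s) := by
    rw [← Set.compl_Ici, probReal_compl_eq_one_sub measurableSet_Ici]
  calc ∫⁻ p in Set.Ici s ×ˢ Set.Iio s, ‖p.1 - p.2‖ₑ ∂μ.prod μ
    _ = ∫⁻ p in Set.Ici s ×ˢ Set.Iio s, ENNReal.ofReal (p.1 - p.2) ∂μ.prod μ :=
      setLIntegral_congr_fun (measurableSet_Ici.prod measurableSet_Iio) fun p hp ↦
        Real.enorm_of_nonneg (sub_nonneg.2 (hp.2.le.trans hp.1))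
    _ = ENNReal.ofReal (∫ p in Set.Ici s ×ˢ Set.Iio s, (p.1 - p.2) ∂μ.prod μ) := by
      refine (ofReal_integral_eq_lintegral_ofReal hinteg.integrableOn ?_).symm
      filter_upwards [ae_restrict_mem (measurableSet_Ici.prod measurableSet_Iio)] with p hp
      exact sub_nonneg.2 (hp.2.le.trans hp.1)
    _ = ENNReal.ofReal (∫ x in Set.Ici s, (x - ∫ t, t ∂μ) ∂μ) := by
      rw [← Measure.prod_restrict,
        integral_sub (hμ.integrableOn.comp_fst _) (hμ.integrableOn.comp_snd _),
        integral_fun_fst (fun t : ℝ ↦ t), integral_fun_snd (fun t : ℝ ↦ t),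
        integral_sub hμ.integrableOn (integrable_const _)]
      simp only [measureReal_restrict_apply_univ, integral_const, smul_eq_mul, hIio, hsplit]
      congr 1
      ring

lemma setLIntegral_mem_uIoc_enorm_sub (hμ : Integrable (fun t ↦ t) μ) (s : ℝ) :
    ∫⁻ p in {p : ℝ × ℝ | s ∈ Set.uIoc p.1 p.2}, ‖p.1 - p.2‖ₑ ∂μ.prod μ
      = 2 * ENNReal.ofReal (∫ x in Set.Ici s, (x - ∫ t, t ∂μ) ∂μ) := by
  have hset : {p : ℝ × ℝ | s ∈ Set.uIoc p.1 p.2}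
      = Set.Ici s ×ˢ Set.Iio s ∪ Set.Iio s ×ˢ Set.Ici s := by
    ext p
    simp only [Set.mem_ofPred_eq, Set.mem_uIoc, Set.mem_union, Set.mem_prod, Set.mem_Ici,
      Set.mem_Iio]
    tauto
  have hdisj : Disjoint (Set.Ici s ×ˢ Set.Iio s) (Set.Iio s ×ˢ Set.Ici s) :=
    Set.disjoint_prod.2 <| .inl <| (Set.Iio_disjoint_Ici le_rfl).symm
  have hswap : ∫⁻ p in Set.Iio s ×ˢ Set.Ici s, ‖p.1 - p.2‖ₑ ∂μ.prod μ
      = ∫⁻ p in Set.Ici s ×ˢ Set.Iio s, ‖p.1 - p.2‖ₑ ∂μ.prod μ := by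
    rw [← Measure.prod_restrict, ← Measure.prod_restrict, ← lintegral_prod_swap]
    simp only [Prod.fst_swap, Prod.snd_swap, ← edist_eq_enorm_sub, edist_comm]
  rw [hset, lintegral_union (measurableSet_Iio.prod measurableSet_Ici) hdisj, hswap,
    setLIntegral_Ici_prod_Iio_enorm_sub hμ, two_mul]

theorem evariance_le_lintegral_deriv_sq_mul (hμ : Integrable (fun t ↦ t) μ) {f : ℝ → ℝ}
    (hf : ContDiff ℝ 1 f) :
    eVar[f; μ]
      ≤ ∫⁻ s, ‖deriv f s‖ₑ ^ 2 * ENNReal.ofReal (∫ x in Set.Ici s, (x - ∫ t, t ∂μ) ∂μ) := by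
  have hderiv : Measurable fun s ↦ ‖deriv f s‖ₑ ^ 2 := (measurable_deriv f).enorm.pow_const 2
  have htwice : 2 * eVar[f; μ] ≤ 2 * ∫⁻ s, ‖deriv f s‖ₑ ^ 2 *
      ENNReal.ofReal (∫ x in Set.Ici s, (x - ∫ t, t ∂μ) ∂μ) := by
    calc 2 * eVar[f; μ]
      _ = ∫⁻ p, ‖f p.1 - f p.2‖ₑ ^ 2 ∂μ.prod μ :=
        (lintegral_prod_enorm_sub_sq hf.continuous.aestronglyMeasurable).symm
      _ ≤ ∫⁻ p, ‖p.1 - p.2‖ₑ * (∫⁻ s in Set.uIoc p.1 p.2, ‖deriv f s‖ₑ ^ 2) ∂μ.prod μ :=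
        lintegral_mono fun p ↦ enorm_sub_sq_le_enorm_sub_mul_lintegral hf p.1 p.2
      _ = ∫⁻ s, ‖deriv f s‖ₑ ^ 2 *
            ∫⁻ p in {p : ℝ × ℝ | s ∈ Set.uIoc p.1 p.2}, ‖p.1 - p.2‖ₑ ∂μ.prod μ :=
        lintegral_mul_setLIntegral_uIoc (by fun_prop) hderiv
      _ = _ := by
        simp only [setLIntegral_mem_uIoc_enorm_sub hμ, mul_left_comm _ (2 : ℝ≥0∞)]
        exact lintegral_const_mul' _ _ ENNReal.ofNat_ne_top
  exact (ENNReal.mul_le_mul_iff_right two_ne_zero ENNReal.ofNat_ne_top).1 htwice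

end Kernel

lemma hasDerivAt_gaussianPDFReal (m : ℝ) (v : ℝ≥0) (x : ℝ) :
    HasDerivAt (gaussianPDFReal m v) (-((x - m) / v * gaussianPDFReal m v x)) x := by
  have hexponent : HasDerivAt (fun y ↦ -(y - m) ^ 2 / (2 * v)) (-((x - m) / v)) x := by
    refine ((((hasDerivAt_id' x).sub_const m).fun_pow 2).fun_neg.div_const _).congr_deriv ?_
    ring
  refine (hexponent.exp.const_mul (√(2 * Real.pi * v))⁻¹).congr_deriv ?_
  rw [gaussianPDFReal_def]
  ring

lemma setIntegral_Ici_sub_mean_gaussianReal (m : ℝ) {v : ℝ≥0} (hv : v ≠ 0) (s : ℝ) :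
    ∫ x in Set.Ici s, (x - m) ∂gaussianReal m v = v * gaussianPDFReal m v s := by
  have hv' : (v : ℝ) ≠ 0 := NNReal.coe_ne_zero.2 hv
  have hderiv (x : ℝ) : HasDerivAt (fun y ↦ -v * gaussianPDFReal m v y)
      (gaussianPDFReal m v x * (x - m)) x := by
    refine ((hasDerivAt_gaussianPDFReal m v x).const_mul (-(v : ℝ))).congr_deriv ?_
    field
  have hinteg : Integrable (fun x ↦ gaussianPDFReal m v x * (x - m)) := by
    have : Integrable (fun x ↦ x - m) (gaussianReal m v) :=
      ((memLp_id_gaussianReal 1).integrable le_rfl).sub (integrable_const m)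
    rw [gaussianReal_of_var_ne_zero m hv, integrable_withDensity_iff_integrable_smul'
      (measurable_gaussianPDF m v) (.of_forall fun _ ↦ gaussianPDF_lt_top)] at this
    simpa only [toReal_gaussianPDF, smul_eq_mul] using this
  have hlim : Filter.Tendsto (fun y ↦ -v * gaussianPDFReal m v y) Filter.atTop (nhds 0) :=
    tendsto_zero_of_hasDerivAt_of_integrableOn_Ioi (a := s) (fun x _ ↦ hderiv x)
      hinteg.integrableOn ((integrable_gaussianPDFReal m v).const_mul _).integrableOn
  calc ∫ x in Set.Ici s, (x - m) ∂gaussianReal m v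
    _ = ∫ x in Set.Ioi s, gaussianPDFReal m v x * (x - m) := by
      rw [← integral_indicator measurableSet_Ici, integral_gaussianReal_eq_integral_smul hv,
        ← integral_Ici_eq_integral_Ioi, ← integral_indicator measurableSet_Ici]
      simp only [Set.indicator_mul_right, smul_eq_mul]
    _ = v * gaussianPDFReal m v s := by
      rw [integral_Ioi_of_hasDerivAt_of_tendsto' (fun x _ ↦ hderiv x) hinteg.integrableOn hlim]
      ring

theorem evariance_gaussianReal_le_lintegral_deriv_sq (m : ℝ) (v : ℝ≥0) {f : ℝ → ℝ}
    (hf : ContDiff ℝ 1 f) :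
    eVar[f; gaussianReal m v] ≤ v * ∫⁻ x, ‖deriv f x‖ₑ ^ 2 ∂gaussianReal m v := by
  obtain rfl | hv := eq_or_ne v 0
  · simp [gaussianReal_zero_var, evariance]
  have hinteg : Integrable (fun t ↦ t) (gaussianReal m v) :=
    (memLp_id_gaussianReal 1).integrable le_rfl
  have hderiv : Measurable fun x ↦ ‖deriv f x‖ₑ ^ 2 := (measurable_deriv f).enorm.pow_const 2
  calc eVar[f; gaussianReal m v]
    _ ≤ ∫⁻ x, ‖deriv f x‖ₑ ^ 2 * ENNReal.ofReal (v * gaussianPDFReal m v x) := by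
      simpa only [integral_id_gaussianReal, setIntegral_Ici_sub_mean_gaussianReal m hv] using
        evariance_le_lintegral_deriv_sq_mul hinteg hf
    _ = ∫⁻ x, v * (gaussianPDF m v x * ‖deriv f x‖ₑ ^ 2) := by
      refine lintegral_congr fun x ↦ ?_
      rw [ENNReal.ofReal_mul v.coe_nonneg, ENNReal.ofReal_coe_nnreal, ← gaussianPDF, mul_comm,
        mul_assoc]
    _ = v * ∫⁻ x, ‖deriv f x‖ₑ ^ 2 ∂gaussianReal m v := by
      rw [gaussianReal_of_var_ne_zero m hv, lintegral_const_mul' _ _ ENNReal.coe_ne_top,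
        lintegral_withDensity_eq_lintegral_mul _ (measurable_gaussianPDF m v) hderiv]
      rfl

end PoincareReal

section PoincarePi

variable {ι : Type*} [DecidableEq ι]

lemma deriv_comp_update [Finite ι] {F : Type*} [NormedAddCommGroup F] [NormedSpace ℝ F]
    {f : (ι → ℝ) → F} (hf : Differentiable ℝ f) (x : ι → ℝ) (i : ι) (t : ℝ) :
    deriv (fun s ↦ f (Function.update x i s)) t
      = fderiv ℝ f (Function.update x i t) (Pi.single i 1) := by
  have := Fintype.ofFinite ι
  exact ((hf _).hasFDerivAt.comp_hasDerivAt t (hasDerivAt_update x i t)).deriv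

variable [Fintype ι] (m : ι → ℝ) (v : ι → ℝ≥0) {f : (ι → ℝ) → ℝ}

theorem evariance_pi_gaussianReal_le_sum_lintegral_fderiv_sq (hf : ContDiff ℝ 1 f) :
    eVar[f; Measure.pi fun i ↦ gaussianReal (m i) (v i)]
      ≤ ∑ i, v i * ∫⁻ x, ‖fderiv ℝ f x (Pi.single i 1)‖ₑ ^ 2
          ∂Measure.pi fun i ↦ gaussianReal (m i) (v i) := by
  refine (evariance_pi_le_sum_lintegral_evariance hf.continuous.measurable).trans <|
    Finset.sum_le_sum fun i _ ↦ ?_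
  have hmeas : Measurable fun x ↦ ‖fderiv ℝ f x (Pi.single i 1)‖ₑ ^ 2 :=
    (measurable_fderiv_apply_const ℝ f _).enorm.pow_const 2
  rw [← lintegral_pi_lintegral_update _ hmeas i, ← lintegral_const_mul' _ _ ENNReal.coe_ne_top]
  refine lintegral_mono fun x ↦ ?_
  have hline : ContDiff ℝ 1 fun t ↦ f (Function.update x i t) := hf.comp (contDiff_update 1 x i)
  simpa only [deriv_comp_update (hf.differentiable one_ne_zero)] using
    evariance_gaussianReal_le_lintegral_deriv_sq (m i) (v i) hline

variable {m v}

lemma evariance_pi_gaussianReal_le_ofReal_sum_integral_fderiv_sq (hf : ContDiff ℝ 1 f)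
    (hderiv : ∀ i, MemLp (fun x ↦ fderiv ℝ f x (Pi.single i 1)) 2
      (Measure.pi fun i ↦ gaussianReal (m i) (v i))) :
    eVar[f; Measure.pi fun i ↦ gaussianReal (m i) (v i)]
      ≤ ENNReal.ofReal (∑ i, v i * ∫ x, fderiv ℝ f x (Pi.single i 1) ^ 2
          ∂Measure.pi fun i ↦ gaussianReal (m i) (v i)) := by
  refine (evariance_pi_gaussianReal_le_sum_lintegral_fderiv_sq m v hf).trans_eq ?_
  rw [ENNReal.ofReal_sum_of_nonneg fun i _ ↦ by positivity]
  refine Finset.sum_congr rfl fun i _ ↦ ?_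
  rw [lintegral_enorm_sq_eq_ofReal_integral_sq (hderiv i), ENNReal.ofReal_mul (v i).coe_nonneg,
    ENNReal.ofReal_coe_nnreal]

lemma memLp_two_of_memLp_fderiv (hf : ContDiff ℝ 1 f)
    (hderiv : ∀ i, MemLp (fun x ↦ fderiv ℝ f x (Pi.single i 1)) 2
      (Measure.pi fun i ↦ gaussianReal (m i) (v i))) :
    MemLp f 2 (Measure.pi fun i ↦ gaussianReal (m i) (v i)) :=
  (evariance_lt_top_iff_memLp hf.continuous.aestronglyMeasurable).1 <|
    (evariance_pi_gaussianReal_le_ofReal_sum_integral_fderiv_sq hf hderiv).trans_lt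
      ENNReal.ofReal_lt_top

theorem variance_pi_gaussianReal_le_sum_integral_fderiv_sq (hf : ContDiff ℝ 1 f)
    (hderiv : ∀ i, MemLp (fun x ↦ fderiv ℝ f x (Pi.single i 1)) 2
      (Measure.pi fun i ↦ gaussianReal (m i) (v i))) :
    Var[f; Measure.pi fun i ↦ gaussianReal (m i) (v i)]
      ≤ ∑ i, v i * ∫ x, fderiv ℝ f x (Pi.single i 1) ^ 2
          ∂Measure.pi fun i ↦ gaussianReal (m i) (v i) := by
  rw [← ENNReal.ofReal_le_ofReal_iff (Finset.sum_nonneg fun i _ ↦ by positivity),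
    ofReal_variance (memLp_two_of_memLp_fderiv hf hderiv)]
  exact evariance_pi_gaussianReal_le_ofReal_sum_integral_fderiv_sq hf hderiv

end PoincarePi

section GibbsWeight

variable {ι : Type*} [Fintype ι]

/-- The weight of the site `i` in the Gibbs measure at inverse temperature `β` of the energy
landscape `x`. -/
noncomputable def gibbsWeight (β : ℝ) (i : ι) (x : ι → ℝ) : ℝ :=
  Real.exp (β * x i) / ∑ j, Real.exp (β * x j)

lemma sum_exp_pos [Nonempty ι] (β : ℝ) (x : ι → ℝ) : 0 < ∑ j, Real.exp (β * x j) :=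
  Finset.sum_pos (fun _ _ ↦ Real.exp_pos _) Finset.univ_nonempty

lemma gibbsWeight_nonneg (β : ℝ) (i : ι) (x : ι → ℝ) : 0 ≤ gibbsWeight β i x := by
  unfold gibbsWeight
  positivity

lemma sum_gibbsWeight [Nonempty ι] (β : ℝ) (x : ι → ℝ) : ∑ i, gibbsWeight β i x = 1 := by
  simp only [gibbsWeight, ← Finset.sum_div]
  exact div_self (sum_exp_pos β x).ne'

lemma gibbsWeight_le_one (β : ℝ) (i : ι) (x : ι → ℝ) : gibbsWeight β i x ≤ 1 :=
  have : Nonempty ι := ⟨i⟩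
  sum_gibbsWeight β x ▸
    Finset.single_le_sum (fun j _ ↦ gibbsWeight_nonneg β j x) (Finset.mem_univ i)

lemma gibbsWeight_eq_exp_sub_log (β : ℝ) (i : ι) (x : ι → ℝ) :
    gibbsWeight β i x = Real.exp (β * x i - Real.log (∑ j, Real.exp (β * x j))) := by
  have : Nonempty ι := ⟨i⟩
  rw [Real.exp_sub, Real.exp_log (sum_exp_pos β x), gibbsWeight]

lemma contDiff_log_sum_exp [Nonempty ι] (β : ℝ) {k : WithTop ℕ∞} :
    ContDiff ℝ k fun x : ι → ℝ ↦ Real.log (∑ j, Real.exp (β * x j)) :=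
  ContDiff.log (by fun_prop) fun x ↦ (sum_exp_pos β x).ne'

lemma contDiff_gibbsWeight (β : ℝ) (i : ι) {k : WithTop ℕ∞} : ContDiff ℝ k (gibbsWeight β i) := by
  have : Nonempty ι := ⟨i⟩
  exact ContDiff.div (by fun_prop) (by fun_prop) fun x ↦ (sum_exp_pos β x).ne'

lemma memLp_gibbsWeight (β : ℝ) (i : ι) {p : ℝ≥0∞} (μ : Measure (ι → ℝ)) [IsFiniteMeasure μ] :
    MemLp (gibbsWeight β i) p μ := by
  refine .of_bound (contDiff_gibbsWeight (k := 0) β i).continuous.aestronglyMeasurable 1 <|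
    .of_forall fun x ↦ ?_
  rw [Real.norm_of_nonneg (gibbsWeight_nonneg β i x)]
  exact gibbsWeight_le_one β i x

lemma gibbsWeight_comp_equiv (β : ℝ) (e : ι ≃ ι) (i : ι) (x : ι → ℝ) :
    gibbsWeight β i (x ∘ e) = gibbsWeight β (e i) x := by
  simp only [gibbsWeight, Function.comp_apply, e.sum_comp fun j ↦ Real.exp (β * x j)]

lemma integral_gibbsWeight_pi (β : ℝ) (i : ι) (μ : Measure ℝ) [IsProbabilityMeasure μ] :
    ∫ x, gibbsWeight β i x ∂(Measure.pi fun _ : ι ↦ μ) = 1 / Fintype.card ι := by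
  classical
  have : Nonempty ι := ⟨i⟩
  have hexch (j : ι) : ∫ x, gibbsWeight β j x ∂(Measure.pi fun _ : ι ↦ μ)
      = ∫ x, gibbsWeight β i x ∂(Measure.pi fun _ : ι ↦ μ) := by
    have hperm := measurePreserving_arrowCongr' (fun _ : ι ↦ μ) (fun _ ↦ μ) (Equiv.swap i j)
      (MeasurableEquiv.refl ℝ) fun _ ↦ .id μ
    rw [← hperm.integral_comp']
    refine integral_congr_ae <| .of_forall fun x ↦ ?_
    exact (gibbsWeight_comp_equiv β (Equiv.swap i j).symm j x).trans (by simp)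
  have hsum : ∑ j, ∫ x, gibbsWeight β j x ∂(Measure.pi fun _ : ι ↦ μ) = 1 := by
    rw [← integral_finsetSum _ fun j _ ↦ (memLp_gibbsWeight β j _).integrable le_rfl]
    simp [sum_gibbsWeight]
  rw [eq_div_iff (Nat.cast_ne_zero.2 Fintype.card_ne_zero), mul_comm, ← nsmul_eq_mul,
    ← Finset.card_univ, ← Finset.sum_const, ← hsum]
  exact Finset.sum_congr rfl fun j _ ↦ (hexch j).symm

lemma hasFDerivAt_log_sum_exp [Nonempty ι] (β : ℝ) (x : ι → ℝ) :
    HasFDerivAt (fun x : ι → ℝ ↦ Real.log (∑ j, Real.exp (β * x j)))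
      (∑ j, (β * gibbsWeight β j x) • ContinuousLinearMap.proj (R := ℝ) (φ := fun _ ↦ ℝ) j) x := by
  have hsum : HasFDerivAt (fun x : ι → ℝ ↦ ∑ j, Real.exp (β * x j))
      (∑ j, Real.exp (β * x j) • β • ContinuousLinearMap.proj (R := ℝ) (φ := fun _ ↦ ℝ) j) x :=
    HasFDerivAt.fun_sum fun j _ ↦ ((hasFDerivAt_apply j x).const_mul β).exp
  refine (hsum.log (sum_exp_pos β x).ne').congr_fderiv ?_
  rw [Finset.smul_sum]
  refine Finset.sum_congr rfl fun j _ ↦ ?_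
  rw [smul_smul, smul_smul, gibbsWeight]
  congr 1
  ring

variable [DecidableEq ι]

lemma fderiv_gibbsWeight_single (β : ℝ) (i j : ι) (x : ι → ℝ) :
    fderiv ℝ (gibbsWeight β i) x (Pi.single j 1)
      = β * (gibbsWeight β i x * ((if i = j then 1 else 0) - gibbsWeight β j x)) := by
  have : Nonempty ι := ⟨i⟩
  have hderiv := (((hasFDerivAt_apply (𝕜 := ℝ) i x).const_mul β).fun_sub
    (hasFDerivAt_log_sum_exp β x)).exp
  simp only [← gibbsWeight_eq_exp_sub_log] at hderiv
  rw [hderiv.fderiv]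
  simp only [smul_apply, sub_apply, sum_apply, ContinuousLinearMap.proj_apply, Pi.single_apply,
    smul_eq_mul, mul_ite, mul_one, mul_zero, Finset.sum_ite_eq', Finset.mem_univ, if_true]
  split_ifs <;> ring

lemma sum_sum_mul_ite_sub_sq_le {w : ι → ℝ} (hw : ∀ i, 0 ≤ w i) (hsum : ∑ i, w i = 1) :
    ∑ i, ∑ j, (w i * ((if i = j then 1 else 0) - w j)) ^ 2 ≤ ∑ i, w i ^ 2 := by
  have hrow (i : ι) : ∑ j, (w i * ((if i = j then 1 else 0) - w j)) ^ 2
      = w i ^ 2 - 2 * w i ^ 3 + w i ^ 2 * ∑ j, w j ^ 2 := by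
    have hterm (j : ι) : (w i * ((if i = j then 1 else 0) - w j)) ^ 2
        = (if i = j then w i ^ 2 - 2 * w i ^ 3 else 0) + w i ^ 2 * w j ^ 2 := by
      split_ifs with hij
      · subst hij
        ring
      · ring
    simp only [hterm, Finset.sum_add_distrib, ← Finset.mul_sum, Finset.sum_ite_eq,
      Finset.mem_univ, if_true]
  have cauchy : (∑ i, w i ^ 2) ^ 2 ≤ ∑ i, w i ^ 3 := by
    simpa only [hsum, one_mul] using Finset.sum_sq_le_sum_mul_sum_of_sq_le_mul Finset.univ
      (fun i _ ↦ hw i) (fun i _ ↦ pow_nonneg (hw i) 3)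
      (fun i _ ↦ (by ring : (w i ^ 2) ^ 2 = w i * w i ^ 3).le)
  calc ∑ i, ∑ j, (w i * ((if i = j then 1 else 0) - w j)) ^ 2
    _ = ∑ i, w i ^ 2 - 2 * ∑ i, w i ^ 3 + (∑ i, w i ^ 2) ^ 2 := by
      simp only [hrow, Finset.sum_add_distrib, Finset.sum_sub_distrib, ← Finset.mul_sum,
        ← Finset.sum_mul, sq (∑ i, w i ^ 2)]
    _ ≤ ∑ i, w i ^ 2 := by
      have : 0 ≤ ∑ i, w i ^ 3 := Finset.sum_nonneg fun i _ ↦ pow_nonneg (hw i) 3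
      linarith

end GibbsWeight

section GibbsBound

variable {ι : Type*} [Fintype ι]

lemma memLp_fderiv_gibbsWeight_single [DecidableEq ι] (β : ℝ) (i j : ι) {p : ℝ≥0∞}
    (μ : Measure (ι → ℝ)) [IsFiniteMeasure μ] :
    MemLp (fun x ↦ fderiv ℝ (gibbsWeight β i) x (Pi.single j 1)) p μ := by
  simp only [fderiv_gibbsWeight_single]
  have hsub : MemLp (fun x ↦ (if i = j then 1 else 0) - gibbsWeight β j x) p μ :=
    (memLp_const _).sub (memLp_gibbsWeight β j μ)
  exact (hsub.mul' (memLp_gibbsWeight β i (p := ∞) μ)).const_mul β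

lemma sum_sum_integral_fderiv_gibbsWeight_sq_le [Nonempty ι] [DecidableEq ι] (β : ℝ)
    (μ : Measure (ι → ℝ)) [IsFiniteMeasure μ] :
    ∑ i, ∑ j, ∫ x, fderiv ℝ (gibbsWeight β i) x (Pi.single j 1) ^ 2 ∂μ
      ≤ β ^ 2 * ∑ i, ∫ x, gibbsWeight β i x ^ 2 ∂μ := by
  have hderiv (i j : ι) :
      Integrable (fun x ↦ fderiv ℝ (gibbsWeight β i) x (Pi.single j 1) ^ 2) μ :=
    (memLp_fderiv_gibbsWeight_single β i j μ).integrable_sq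
  have hsq (i : ι) : Integrable (fun x ↦ gibbsWeight β i x ^ 2) μ :=
    (memLp_gibbsWeight β i μ).integrable_sq
  have hpointwise (x : ι → ℝ) : ∑ i, ∑ j, fderiv ℝ (gibbsWeight β i) x (Pi.single j 1) ^ 2
      ≤ β ^ 2 * ∑ i, gibbsWeight β i x ^ 2 := by
    simp only [fderiv_gibbsWeight_single, mul_pow β, ← Finset.mul_sum]
    exact mul_le_mul_of_nonneg_left (sum_sum_mul_ite_sub_sq_le (fun i ↦ gibbsWeight_nonneg β i x)
      (sum_gibbsWeight β x)) (sq_nonneg β)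
  calc ∑ i, ∑ j, ∫ x, fderiv ℝ (gibbsWeight β i) x (Pi.single j 1) ^ 2 ∂μ
    _ = ∫ x, ∑ i, ∑ j, fderiv ℝ (gibbsWeight β i) x (Pi.single j 1) ^ 2 ∂μ := by
      simp only [← integral_finsetSum Finset.univ fun j _ ↦ hderiv _ j]
      exact (integral_finsetSum _ fun i _ ↦ integrable_finsetSum _ fun j _ ↦ hderiv i j).symm
    _ ≤ ∫ x, β ^ 2 * ∑ i, gibbsWeight β i x ^ 2 ∂μ :=
      integral_mono (integrable_finsetSum _ fun i _ ↦ integrable_finsetSum _ fun j _ ↦ hderiv i j)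
        ((integrable_finsetSum _ fun i _ ↦ hsq i).const_mul _) hpointwise
    _ = β ^ 2 * ∑ i, ∫ x, gibbsWeight β i x ^ 2 ∂μ := by
      rw [integral_const_mul, integral_finsetSum _ fun i _ ↦ hsq i]

theorem one_sub_mul_sum_integral_gibbsWeight_sq_le [Nonempty ι] (β m : ℝ) (v : ℝ≥0) :
    (1 - v * β ^ 2) * ∑ i, ∫ x, gibbsWeight β i x ^ 2 ∂(Measure.pi fun _ : ι ↦ gaussianReal m v)
      ≤ 1 / Fintype.card ι := by
  classical
  set γ := Measure.pi fun _ : ι ↦ gaussianReal m v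
  have poincare (i : ι) : ∫ x, gibbsWeight β i x ^ 2 ∂γ - (1 / Fintype.card ι) ^ 2
      ≤ ∑ j, v * ∫ x, fderiv ℝ (gibbsWeight β i) x (Pi.single j 1) ^ 2 ∂γ := by
    rw [← integral_gibbsWeight_pi β i (gaussianReal m v)]
    exact (variance_eq_sub (memLp_gibbsWeight β i γ)).symm.trans_le
      (variance_pi_gaussianReal_le_sum_integral_fderiv_sq (contDiff_gibbsWeight β i)
        fun j ↦ memLp_fderiv_gibbsWeight_single β i j γ)
  have hmean : ∑ _i : ι, (1 / Fintype.card ι : ℝ) ^ 2 = 1 / Fintype.card ι := by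
    simp [field]
  have hsum := Finset.sum_le_sum fun i (_ : i ∈ Finset.univ) ↦ poincare i
  simp only [Finset.sum_sub_distrib, hmean, ← Finset.mul_sum] at hsum
  have hself :=
    mul_le_mul_of_nonneg_left (sum_sum_integral_fderiv_gibbsWeight_sq_le β γ) v.coe_nonneg
  linarith

end GibbsBound

section FreeEnergy

variable {n : ℕ} [NeZero n] {β : ℝ}

lemma contDiff_freeEnergy (β : ℝ) {k : WithTop ℕ∞} : ContDiff ℝ k (freeEnergy n β) :=
  contDiff_const.mul (contDiff_log_sum_exp β)

lemma fderiv_freeEnergy_single (hβ : β ≠ 0) (x : Fin n → ℝ) (i : Fin n) :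
    fderiv ℝ (freeEnergy n β) x (Pi.single i 1) = gibbsWeight β i x := by
  have hderiv : HasFDerivAt (freeEnergy n β) _ x := (hasFDerivAt_log_sum_exp β x).const_mul (1 / β)
  rw [hderiv.fderiv]
  simp [Pi.single_apply, hβ]

lemma memLp_fderiv_freeEnergy_single (hβ : β ≠ 0) (i : Fin n) {p : ℝ≥0∞}
    (μ : Measure (Fin n → ℝ)) [IsFiniteMeasure μ] :
    MemLp (fun x ↦ fderiv ℝ (freeEnergy n β) x (Pi.single i 1)) p μ := by
  simpa only [fderiv_freeEnergy_single hβ] using memLp_gibbsWeight β i μ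

variable (m : Fin n → ℝ) (v : Fin n → ℝ≥0)

lemma memLp_freeEnergy (hβ : β ≠ 0) :
    MemLp (freeEnergy n β) 2 (Measure.pi fun i ↦ gaussianReal (m i) (v i)) :=
  memLp_two_of_memLp_fderiv (contDiff_freeEnergy β) fun i ↦
    memLp_fderiv_freeEnergy_single hβ i _

theorem variance_freeEnergy_le_sum_integral_gibbsWeight_sq (hβ : β ≠ 0) :
    Var[freeEnergy n β; Measure.pi fun i ↦ gaussianReal (m i) (v i)]
      ≤ ∑ i, v i * ∫ x, gibbsWeight β i x ^ 2 ∂Measure.pi fun i ↦ gaussianReal (m i) (v i) := by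
  simpa only [fderiv_freeEnergy_single hβ] using
    variance_pi_gaussianReal_le_sum_integral_fderiv_sq (contDiff_freeEnergy (n := n) β) fun i ↦
      memLp_fderiv_freeEnergy_single hβ i _

end FreeEnergy

lemma sq_lt_half_of_lt_sqrt_log_two_div_two {β : ℝ} (hβ0 : 0 ≤ β)
    (hβ : β < Real.sqrt (Real.log 2 / 2)) : β ^ 2 < 1 / 2 := by
  linarith [(Real.lt_sqrt hβ0).1 hβ, Real.log_two_lt_d9]

lemma inv_one_sub_le_one_sub_div {b : ℝ} (hb : b < 1 / 2) :
    1 / (1 - b) ≤ (1 - b) / (1 - 2 * b) := by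
  rw [div_le_div_iff₀ (by linarith) (by linarith)]
  nlinarith [sq_nonneg b]

theorem stmt12_general (n : ℕ) (hn : 0 < n) (β : ℝ) (hβ0 : β ≠ 0) (hβ : β ^ 2 < 1) :
    (∫ x, (freeEnergy n β x) ^ 2 ∂(gaussN n)) - (∫ x, freeEnergy n β x ∂(gaussN n)) ^ 2
      ≤ 1 / (1 - β ^ 2) * (1 / n) := by
  have : NeZero n := ⟨hn.ne'⟩
  have hmem : MemLp (freeEnergy n β) 2 (Measure.pi fun _ ↦ gaussianReal 0 1) :=
    memLp_freeEnergy 0 1 hβ0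
  have hbound := variance_freeEnergy_le_sum_integral_gibbsWeight_sq (n := n) 0 1 hβ0
  have hgibbs := one_sub_mul_sum_integral_gibbsWeight_sq_le (ι := Fin n) β 0 1
  simp only [Pi.zero_apply, Pi.one_apply, NNReal.coe_one, one_mul, Fintype.card_fin]
    at hbound hgibbs
  calc (∫ x, (freeEnergy n β x) ^ 2 ∂(gaussN n)) - (∫ x, freeEnergy n β x ∂(gaussN n)) ^ 2
    _ = Var[freeEnergy n β; gaussN n] := (variance_eq_sub hmem).symm
    _ ≤ ∑ i, ∫ x, gibbsWeight β i x ^ 2 ∂gaussN n := hbound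
    _ ≤ 1 / (1 - β ^ 2) * (1 / n) := by
      rw [one_div_mul_eq_div]
      exact (le_div_iff₀' (sub_pos.2 hβ)).2 hgibbs

theorem stmt12 (n : ℕ) (hn : 0 < n) (β : ℝ) (hβ0 : 0 < β)
    (hβ : β < Real.sqrt (Real.log 2 / 2)) :
    (∫ x, (freeEnergy n β x) ^ 2 ∂(gaussN n)) - (∫ x, freeEnergy n β x ∂(gaussN n)) ^ 2
      ≤ ((1 - β ^ 2) / (1 - 2 * β ^ 2)) * (1 / n) := by
  have hhalf := sq_lt_half_of_lt_sqrt_log_two_div_two hβ0.le hβ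
  exact (stmt12_general n hn β hβ0.ne' (by linarith)).trans <|
    mul_le_mul_of_nonneg_right (inv_one_sub_le_one_sub_div hhalf) (by positivity)
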